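/- Let q = p^m where p ≡ 3 (mod 8) is prime and m ≡ 2 (mod 4). Let x, a, b be integers with x² = q (so x = ±p^{m/2} and q = x² + 4·0²), q = a² + 2b² with a ≡ 1 (mod 4), and suppose x + a = −2. Then D = C_3^8 ∪ C_5^8 is a skew PDS corresponding to the (q,(q−1)/4,(q−11−6x)/16,(q−3+2x)/16)-PDS C_0^4. Moreover, for every 0 ≤ i ≤ 7, the set C_i^8 ∪ C_{i+2}^8 (indices of order-8 classes taken mod 8) is a skew PDS corresponding to the (q,(q−1)/4,(q−11−6x)/16,(q−3+2x)/16)-PDS C_{i+1}^4 (index mod 4). -/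

import Mathlib

open Finset

section Defs

variable {G : Type*} [AddCommGroup G] [Fintype G] [DecidableEq G]

/-- The multiset `Δ(D)` of internal differences `x - y` (for `x ≠ y` in `D`). -/
def intDiff (D : Finset G) : Multiset G :=
  ((D ×ˢ D).filter (fun p => p.1 ≠ p.2)).val.map (fun p => p.1 - p.2)

/-- The multiset `Δ(D, E)` of external differences `x - y` for `x ∈ D`, `y ∈ E`. -/
def extDiff (D E : Finset G) : Multiset G :=
  (D ×ˢ E).val.map (fun p => p.1 - p.2)

/-- The finset `G^*` of nonzero elements of `G`. -/
def Gstar (G : Type*) [AddCommGroup G] [Fintype G] [DecidableEq G] : Finset G :=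
  Finset.univ.erase 0

/-- `A` is a `(v, k, lam, mu)` partial difference set in `G`:
`Δ(A) = lam • A^* + mu • (G^* \ A)`. -/
def IsPDS (A : Finset G) (v k lam mu : ℕ) : Prop :=
  Fintype.card G = v ∧ A.card = k ∧
    intDiff A = lam • (A.erase 0).val + mu • (Gstar G \ A).val

/-- `D` is a `(v, k, lam, mu)` skew partial difference set corresponding to the
`(v, k, lam, mu)`-PDS `A`: `Δ(D) = lam • A^* + mu • (G^* \ A)`. -/
def IsSkewPDS (D A : Finset G) (v k lam mu : ℕ) : Prop :=
  IsPDS A v k lam mu ∧ D.card = k ∧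
    intDiff D = lam • (A.erase 0).val + mu • (Gstar G \ A).val

/-- `D` is an `(n, m, k₁, …, k_m; lam, mu)` disjoint partial difference family relative
to `T`: the `D i` are pairwise disjoint subsets of `G^*` of sizes `k i`, and
`∑ i, Δ(D i) = lam • T + mu • (G^* \ T)`. -/
def IsDPDF {ι : Type*} [Fintype ι] (D : ι → Finset G) (n m : ℕ) (k : ι → ℕ)
    (T : Finset G) (lam mu : ℕ) : Prop :=
  Fintype.card G = n ∧ Fintype.card ι = m ∧
    (∀ i, (0 : G) ∉ D i) ∧ (∀ i, (D i).card = k i) ∧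
    (Pairwise (fun i j => Disjoint (D i) (D j))) ∧
    ∑ i, intDiff (D i) = lam • T.val + mu • (Gstar G \ T).val

/-- `D` is an `(n, m, k₁, …, k_m; lam, mu)` external partial difference family relative
to `T`: the `D i` are pairwise disjoint subsets of `G^*` of sizes `k i`, and
`∑_{i ≠ j}, Δ(D i, D j) = lam • T + mu • (G^* \ T)`. -/
def IsEPDF {ι : Type*} [Fintype ι] [DecidableEq ι] (D : ι → Finset G) (n m : ℕ)
    (k : ι → ℕ) (T : Finset G) (lam mu : ℕ) : Prop :=
  Fintype.card G = n ∧ Fintype.card ι = m ∧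
    (∀ i, (0 : G) ∉ D i) ∧ (∀ i, (D i).card = k i) ∧
    (Pairwise (fun i j => Disjoint (D i) (D j))) ∧
    ∑ i, ∑ j ∈ Finset.univ.erase i, extDiff (D i) (D j)
      = lam • T.val + mu • (Gstar G \ T).val

/-- `D` is an `(n, m, k₁, …, k_m, lam)` disjoint difference family:
`∑ i, Δ(D i) = lam • G^*`. -/
def IsDDF {ι : Type*} [Fintype ι] (D : ι → Finset G) (n m : ℕ) (k : ι → ℕ)
    (lam : ℕ) : Prop :=
  Fintype.card G = n ∧ Fintype.card ι = m ∧
    (∀ i, (0 : G) ∉ D i) ∧ (∀ i, (D i).card = k i) ∧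
    (Pairwise (fun i j => Disjoint (D i) (D j))) ∧
    ∑ i, intDiff (D i) = lam • (Gstar G).val

/-- `D` is an `(n, m, k₁, …, k_m, lam)` external difference family:
`∑_{i ≠ j}, Δ(D i, D j) = lam • G^*`. -/
def IsEDF {ι : Type*} [Fintype ι] [DecidableEq ι] (D : ι → Finset G) (n m : ℕ)
    (k : ι → ℕ) (lam : ℕ) : Prop :=
  Fintype.card G = n ∧ Fintype.card ι = m ∧
    (∀ i, (0 : G) ∉ D i) ∧ (∀ i, (D i).card = k i) ∧
    (Pairwise (fun i j => Disjoint (D i) (D j))) ∧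
    ∑ i, ∑ j ∈ Finset.univ.erase i, extDiff (D i) (D j) = lam • (Gstar G).val

end Defs

section Cyclotomy

variable {F : Type*} [Field F] [Fintype F] [DecidableEq F]

/-- The cyclotomic class `C_i^e = α^i ⟨α^e⟩` of order `e` in the finite field `F`,
with respect to the primitive element `α`.  (Since `α` has multiplicative order at most
`|F| - 1`, letting `j` range over `0, …, |F| - 1` captures the whole class.) -/
def cycClass (α : F) (e i : ℕ) : Finset F :=
  (Finset.range (Fintype.card F)).image (fun j => α ^ (e * j + i))

/-- `α` is a primitive element of the finite field `F`: every nonzero element of `F`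
is a power of `α`. -/
def IsPrimitiveElt (α : F) : Prop :=
  ∀ x : F, x ≠ 0 → ∃ n : ℕ, α ^ n = x

end Cyclotomy

/-!
Write `q = P ^ 2` and regard `F` as a plane over its subfield `K` with `P` elements. The function
`f = χ₈ ∘ log_α`, extended by `f 0 = 0`, satisfies `f (c y) = χ c * f y` for the quadratic character
`χ` of `K`, and `(f ^ 2 - f) / 2` is the indicator function of `D = C_3^8 ∪ C_5^8`. Since `f ^ 2` is
even and `f` is odd, the cross terms in the autocorrelation of `f ^ 2 - f` cancel, so the
differences of `D` are counted by the autocorrelations of `f` and of `f ^ 2`. As `f ^ 2` is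
`K^*`-invariant, its autocorrelation is elementary. The autocorrelation of `f` at `d` is determined
by the sum `h d` of `f` along an affine line in direction `d` avoiding the origin, namely
`2 * autocorr f d = 2 * (h d) ^ 2 - (P + 1)`.

Up to sign `h d` depends only on the class of `d` modulo `C_0^4`; Frobenius shows that `h` vanishes
on `C_2^4` and agrees up to sign on `C_1^4` and `C_3^4`, and `∑ d, autocorr f d = 0` leaves
`(h 1) ^ 2 + 2 * (h α) ^ 2 = 2 * P`. Thus `P = (h α) ^ 2 + 2 * (h 1 / 2) ^ 2`. On the other hand
`x = P` would make `a ^ 2 > q`, so `x = -P` and `a = P - 2`, and `q = a ^ 2 + 2 * b ^ 2` becomes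
`P = 1 + 2 * (b / 2) ^ 2`. A power of a prime has only one such representation in which the prime
does not divide the second coordinate, and `p ∤ h 1` because `h 1` is, modulo `p`, a nonzero
multiple of the binomial coefficient `(4 * t + 1).choose t`, where `P = 8 * t + 3`. Hence
`(h α) ^ 2 = 1`, which determines every autocorrelation.
-/

section Autocorrelation

variable {G R : Type*} [AddCommGroup G] [Fintype G] [CommRing R]

/-- The periodic autocorrelation of a function on a finite abelian group. On the indicator
function of a set `D` it counts the representations of `d` as a difference of elements of `D`. -/
def autocorr (f : G → R) (d : G) : R := ∑ y, f (y + d) * f y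

lemma autocorr_zero (f : G → R) : autocorr f 0 = ∑ y, f y ^ 2 := by
  simp [autocorr, sq]

lemma sum_autocorr (f : G → R) : ∑ d, autocorr f d = (∑ y, f y) ^ 2 := by
  simp only [autocorr, sq]
  rw [sum_comm, mul_sum]
  refine Fintype.sum_congr _ _ fun y ↦ ?_
  rw [← sum_mul]
  exact congrArg (· * f y) (Equiv.sum_comp (Equiv.addLeft y) f)

lemma autocorr_apply_addEquiv {f : G → R} {ε : R} (hε : ε ^ 2 = 1) (σ : G ≃+ G)
    (hσ : ∀ y, f (σ y) = ε * f y) (d : G) : autocorr f (σ d) = autocorr f d :=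
  calc autocorr f (σ d) = ∑ y, f (σ y + σ d) * f (σ y) :=
        (Equiv.sum_comp σ.toEquiv fun y ↦ f (y + σ d) * f y).symm
    _ = autocorr f d := Fintype.sum_congr _ _ fun y ↦ by
        rw [← map_add, hσ, hσ]; linear_combination f (y + d) * f y * hε

lemma autocorr_const_mul (c : R) (f : G → R) (d : G) :
    autocorr (fun y ↦ c * f y) d = c ^ 2 * autocorr f d := by
  simp only [autocorr, mul_sum]
  exact Fintype.sum_congr _ _ fun y ↦ by ring

lemma autocorr_sub_of_even_of_odd {u f : G → R} (hu : u.Even) (hf : f.Odd) (d : G) :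
    autocorr (fun y ↦ u y - f y) d = autocorr u d + autocorr f d := by
  have cross : ∑ y, u (y + d) * f y = - ∑ y, f (y + d) * u y := by
    rw [← Equiv.sum_comp ((Equiv.addRight d).trans (Equiv.neg G)), ← sum_neg_distrib]
    refine Fintype.sum_congr _ _ fun y ↦ ?_
    have : -(y + d) + d = -y := by abel
    simp only [Equiv.trans_apply, Equiv.coe_addRight, Equiv.neg_apply, this, hu y, hf (y + d)]
    ring
  simp only [autocorr, sub_mul, mul_sub, sum_sub_distrib, cross]
  ring

end Autocorrelation

section DifferenceSets

variable {G : Type*} [AddCommGroup G] [DecidableEq G]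

lemma count_zero_intDiff (D : Finset G) : (intDiff D).count 0 = 0 := by
  simp only [intDiff, Multiset.count_eq_zero, Multiset.mem_map, mem_val, mem_filter, not_exists,
    not_and, sub_eq_zero]
  exact fun p hp ↦ hp.2

lemma intDiff_image (σ : G ≃+ G) (D : Finset G) :
    intDiff (D.image σ) = (intDiff D).map σ := by
  have hpairs : {p ∈ D.image σ ×ˢ D.image σ | p.1 ≠ p.2} =
      {p ∈ D ×ˢ D | p.1 ≠ p.2}.image (Prod.map σ σ) := by
    ext ⟨y, z⟩
    obtain ⟨y, rfl⟩ := σ.surjective y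
    obtain ⟨z, rfl⟩ := σ.surjective z
    simp [σ.injective.eq_iff]
  rw [intDiff, hpairs, image_val_of_injOn (σ.injective.prodMap σ.injective).injOn, intDiff,
    Multiset.map_map, Multiset.map_map]
  simp

variable [Fintype G]

lemma count_intDiff (D : Finset G) {d : G} (hd : d ≠ 0) :
    ((intDiff D).count d : ℤ) = autocorr ((D : Set G).indicator 1) d := by
  have hcount : (intDiff D).count d = #{y | y + d ∈ D ∧ y ∈ D} := by
    rw [intDiff, Multiset.count_map, ← filter_val, card_val]
    refine card_bij' (fun p _ ↦ p.2) (fun y _ ↦ (y + d, y)) ?_ ?_ ?_ ?_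
    all_goals
      simp only [mem_filter, mem_product, mem_univ, true_and, Prod.forall, Prod.mk.injEq]
    · rintro y z ⟨⟨⟨hy, hz⟩, -⟩, rfl⟩
      simpa using ⟨hy, hz⟩
    · intro y hy
      simp [hy, hd]
    · rintro y z ⟨-, rfl⟩
      simp
    · simp
  rw [hcount, card_filter]
  push_cast
  refine Fintype.sum_congr _ _ fun y ↦ ?_
  simp [Set.indicator_apply, ← ite_and, and_comm]

lemma intDiff_eq_of_autocorr {D A : Finset G} {lam mu : ℕ}
    (h : ∀ d ≠ 0, autocorr ((D : Set G).indicator 1) d = if d ∈ A then (lam : ℤ) else mu) :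
    intDiff D = lam • (A.erase 0).val + mu • (Gstar G \ A).val := by
  ext d
  rw [Multiset.count_add, Multiset.count_nsmul, Multiset.count_nsmul,
    Multiset.count_eq_of_nodup (A.erase 0).nodup, Multiset.count_eq_of_nodup (Gstar G \ A).nodup]
  simp only [mem_val]
  obtain rfl | hd := eq_or_ne d 0
  · simp [count_zero_intDiff, Gstar]
  · zify
    rw [count_intDiff D hd, h d hd]
    by_cases hdA : d ∈ A <;> simp [hd, hdA, Gstar]

lemma intDiff_image_eq (σ : G ≃+ G) {D A : Finset G} {lam mu : ℕ}
    (h : intDiff D = lam • (A.erase 0).val + mu • (Gstar G \ A).val) :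
    intDiff (D.image σ) =
      lam • ((A.image σ).erase 0).val + mu • (Gstar G \ A.image σ).val := by
  have herase : (A.image σ).erase 0 = (A.erase 0).image σ := by
    rw [image_erase σ.injective, map_zero]
  have hsdiff : Gstar G \ A.image σ = (Gstar G \ A).image σ := by
    rw [image_sdiff _ _ σ.injective, Gstar, image_erase σ.injective, map_zero,
      image_univ_of_surjective σ.surjective]
  rw [intDiff_image, h, herase, hsdiff, image_val_of_injOn σ.injective.injOn,
    image_val_of_injOn σ.injective.injOn]
  simp [Multiset.map_nsmul]

lemma IsSkewPDS.image (σ : G ≃+ G) {D A : Finset G} {v k lam mu : ℕ}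
    (h : IsSkewPDS D A v k lam mu) : IsSkewPDS (D.image σ) (A.image σ) v k lam mu := by
  obtain ⟨⟨hv, hAk, hA⟩, hDk, hD⟩ := h
  simp only [IsSkewPDS, IsPDS, card_image_of_injective _ σ.injective]
  exact ⟨⟨hv, hAk, intDiff_image_eq σ hA⟩, hDk, intDiff_image_eq σ hD⟩

end DifferenceSets

section Plane

variable {K V R : Type*} [Field K] [AddCommGroup V] [Module K V] [CommRing R]

/-- A function on a `K`-vector space is `χ`-semi-invariant if scaling its argument by `c` scales
its value by `χ c`. Since `χ 0 = 0`, it then vanishes at the origin. -/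
def IsSemiInvariant (χ : MulChar K R) (f : V → R) : Prop :=
  ∀ (c : K) (y : V), f (c • y) = χ c * f y

lemma IsSemiInvariant.sq {χ : MulChar K R} {f : V → R} (hf : IsSemiInvariant χ f)
    (hχ : χ ^ 2 = 1) : IsSemiInvariant (1 : MulChar K R) fun y ↦ f y ^ 2 := fun c y ↦
  show f (c • y) ^ 2 = (1 : MulChar K R) c * f y ^ 2 by
    rw [hf, mul_pow, ← MulChar.pow_apply' χ two_ne_zero, hχ]

variable [Fintype V] in
lemma IsSemiInvariant.autocorr_smul {χ : MulChar K R} {f : V → R} (hf : IsSemiInvariant χ f)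
    (hχ : χ ^ 2 = 1) {c : K} (hc : c ≠ 0) (v : V) : autocorr f (c • v) = autocorr f v := by
  have hχc : χ c ^ 2 = 1 := by
    rw [← MulChar.pow_apply' χ two_ne_zero, hχ, MulChar.one_apply hc.isUnit]
  exact autocorr_apply_addEquiv hχc (LinearEquiv.smulOfNeZero K V c hc).toAddEquiv (hf c) v

variable [Fintype K]

lemma sum_eq_zero_add_of_forall_ne_zero {g : K → R} {x : R} (hg : ∀ c ≠ 0, g c = x) :
    ∑ c, g c = g 0 + (Fintype.card K - 1) * x := by
  classical
  rw [← add_sum_erase _ _ (mem_univ (0 : K)),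
    sum_congr rfl fun c hc ↦ hg c (ne_of_mem_erase hc), sum_const, nsmul_eq_mul,
    card_erase_of_mem (mem_univ _), card_univ, Nat.cast_pred Fintype.card_pos]

variable (K) in
/-- The sum of `f` along the affine line through `w` in the direction `v`. -/
def lineSum (f : V → R) (w v : V) : R := ∑ c : K, f (w + c • v)

lemma lineSum_add_smul (f : V → R) (w v : V) (s : K) :
    lineSum K f (w + s • v) v = lineSum K f w v := by
  simp only [lineSum, add_assoc, ← add_smul]
  exact Equiv.sum_comp (Equiv.addLeft s) fun c ↦ f (w + c • v)

namespace IsSemiInvariant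

variable {χ : MulChar K R} {f : V → R}

lemma lineSum_smul (hf : IsSemiInvariant χ f) (w v : V) {c : K} (hc : c ≠ 0) :
    lineSum K f (c • w) v = χ c * lineSum K f w v := by
  rw [lineSum, ← Equiv.sum_comp (Equiv.mulLeft₀ c hc), lineSum, mul_sum]
  refine Fintype.sum_congr _ _ fun s ↦ ?_
  rw [← hf, smul_add, smul_smul, Equiv.mulLeft₀_apply]

lemma lineSum_zero (hf : IsSemiInvariant χ f) (v : V) :
    lineSum K f 0 v = (∑ c, χ c) * f v := by
  simp only [lineSum, zero_add, hf _ v, sum_mul]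

end IsSemiInvariant

variable [Fintype V]

lemma sum_eq_sum_sum_of_finrank_eq_two (hV : Module.finrank K V = 2) {v w : V}
    (hvw : LinearIndependent K ![v, w]) (g : V → R) :
    ∑ y, g y = ∑ a : K, ∑ s : K, g (a • w + s • v) := by
  let b := basisOfLinearIndependentOfCardEqFinrank hvw (by simp [hV])
  rw [← Equiv.sum_comp ((finTwoArrowEquiv K).symm.trans b.equivFun.symm.toEquiv),
    Fintype.sum_prod_type_right]
  simp [b, Module.Basis.equivFun_symm_apply, add_comm]

lemma sum_eq_sum_lineSum (hV : Module.finrank K V = 2) {v w : V}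
    (hvw : LinearIndependent K ![v, w]) (f : V → R) :
    ∑ y, f y = ∑ a : K, lineSum K f (a • w) v :=
  sum_eq_sum_sum_of_finrank_eq_two hV hvw f

lemma sum_autocorr_smul (f : V → R) (hV : Module.finrank K V = 2) {v w : V}
    (hvw : LinearIndependent K ![v, w]) :
    ∑ c : K, autocorr f (c • v) = ∑ a : K, lineSum K f (a • w) v ^ 2 :=
  calc ∑ c : K, autocorr f (c • v) = ∑ y, lineSum K f y v * f y := by
        simp only [autocorr, lineSum, sum_mul]
        exact sum_comm
    _ = ∑ a : K, ∑ s : K, lineSum K f (a • w) v * f (a • w + s • v) := by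
        simp only [sum_eq_sum_sum_of_finrank_eq_two hV hvw, lineSum_add_smul]
    _ = ∑ a : K, lineSum K f (a • w) v ^ 2 := by
        simp only [← mul_sum, sq, lineSum]

namespace IsSemiInvariant

variable {χ : MulChar K R} {f : V → R}

-- Both sides are the sum of `autocorr f` over the line spanned by `v`.
lemma autocorr_zero_add (hf : IsSemiInvariant χ f) (hχ : χ ^ 2 = 1)
    (hV : Module.finrank K V = 2) {v w : V} (hvw : LinearIndependent K ![v, w]) :
    autocorr f 0 + (Fintype.card K - 1) * autocorr f v =
      lineSum K f 0 v ^ 2 + (Fintype.card K - 1) * lineSum K f w v ^ 2 := by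
  have hlineSum (a : K) (ha : a ≠ 0) : lineSum K f (a • w) v ^ 2 = lineSum K f w v ^ 2 := by
    rw [hf.lineSum_smul _ _ ha, mul_pow, ← MulChar.pow_apply' χ two_ne_zero, hχ,
      MulChar.one_apply ha.isUnit, one_mul]
  have key := sum_autocorr_smul f hV hvw
  rwa [sum_eq_zero_add_of_forall_ne_zero fun c hc ↦ hf.autocorr_smul hχ hc v,
    sum_eq_zero_add_of_forall_ne_zero hlineSum, zero_smul, zero_smul] at key

lemma autocorr_zero_add_of_ne_one [IsDomain R] (hf : IsSemiInvariant χ f) (hχ : χ ^ 2 = 1)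
    (hχ1 : χ ≠ 1) (hV : Module.finrank K V = 2) {v w : V}
    (hvw : LinearIndependent K ![v, w]) :
    autocorr f 0 + (Fintype.card K - 1) * autocorr f v =
      (Fintype.card K - 1) * lineSum K f w v ^ 2 := by
  rw [hf.autocorr_zero_add hχ hV hvw, hf.lineSum_zero, MulChar.sum_eq_zero_of_ne_one hχ1]
  ring

lemma autocorr_of_one {f : V → ℤ} (hf : IsSemiInvariant (1 : MulChar K ℤ) f)
    (hV : Module.finrank K V = 2) {r s : ℤ}
    (hr : ∑ y, f y ^ 2 = r * (Fintype.card K - 1))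
    (hs : ∑ y, f y = s * (Fintype.card K - 1)) {v : V} (hv : v ≠ 0) :
    autocorr f v = (Fintype.card K - 1) * f v ^ 2 + (s - f v) ^ 2 - r := by
  obtain ⟨w, hvw⟩ := exists_linearIndependent_pair_of_one_lt_finrank (hV ▸ one_lt_two) hv
  have hK : (Fintype.card K - 1 : ℤ) ≠ 0 := by
    have := Fintype.one_lt_card (α := K)
    omega
  have hone : ∑ c : K, (1 : MulChar K ℤ) c = Fintype.card K - 1 := by
    rw [sum_eq_zero_add_of_forall_ne_zero fun c hc ↦ MulChar.one_apply hc.isUnit,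
      MulChar.map_zero]
    ring
  have hzero : lineSum K f 0 v = (Fintype.card K - 1) * f v := by rw [hf.lineSum_zero, hone]
  have hline : lineSum K f w v = s - f v := by
    apply mul_left_cancel₀ hK
    rw [sum_eq_sum_lineSum hV hvw, sum_eq_zero_add_of_forall_ne_zero fun a ha ↦ by
      rw [hf.lineSum_smul w v ha, MulChar.one_apply ha.isUnit, one_mul], zero_smul, hzero] at hs
    linear_combination hs
  have key := hf.autocorr_zero_add (one_pow 2) hV hvw
  rw [autocorr_zero, hr, hzero, hline] at key
  apply mul_left_cancel₀ hK
  linear_combination key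

end IsSemiInvariant

end Plane

section PrimitiveRoots

lemma sum_range_mul_of_periodic {M : Type*} [AddCommMonoid M] {g : ℕ → M} {e : ℕ}
    (hg : g.Periodic e) (N : ℕ) : ∑ n ∈ range (N * e), g n = N • ∑ n ∈ range e, g n := by
  induction N with
  | zero => simp
  | succ N ih =>
    rw [add_one_mul, sum_range_add, ih, succ_nsmul]
    congr 1
    refine sum_congr rfl fun n _ ↦ ?_
    rw [add_comm, ← smul_eq_mul, hg.nsmul]

variable {F : Type*} [Field F] [Fintype F] {α : F}

lemma IsPrimitiveElt.isPrimitiveRoot (hα : IsPrimitiveElt α) (hF : 2 < Fintype.card F) :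
    IsPrimitiveRoot α (Fintype.card F - 1) := by
  classical
  have hα0 : α ≠ 0 := by
    rintro rfl
    obtain ⟨y, hy0, hy1⟩ : ∃ y : F, y ≠ 0 ∧ y ≠ 1 := by
      by_contra! h
      have : (univ : Finset F) ⊆ {0, 1} := fun y _ ↦ by
        simpa [or_iff_not_imp_left] using h y
      exact hF.not_ge ((card_le_card this).trans card_le_two)
    obtain ⟨n, rfl⟩ := hα y hy0
    rcases n with _ | n <;> simp at hy0 hy1
  have hgen (u : Fˣ) : u ∈ Subgroup.zpowers (Units.mk0 α hα0) := by
    obtain ⟨n, hn⟩ := hα u u.ne_zero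
    exact ⟨n, Units.ext (by simpa using hn)⟩
  rw [IsPrimitiveRoot.iff_orderOf, ← Units.val_mk0 hα0, orderOf_units,
    orderOf_eq_card_of_forall_mem_zpowers hgen, Nat.card_eq_fintype_card, Fintype.card_units]

section

variable (hα : IsPrimitiveRoot α (Fintype.card F - 1))
include hα

lemma primitiveRoot_ne_zero : α ≠ 0 :=
  hα.ne_zero (by have := Fintype.one_lt_card (α := F); omega)

lemma pow_eq_pow_iff_modEq_card {m n : ℕ} :
    α ^ m = α ^ n ↔ m ≡ n [MOD Fintype.card F - 1] := by
  have h := pow_eq_pow_iff_modEq (x := Units.mk0 α (primitiveRoot_ne_zero hα)) (m := n) (n := m)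
  rwa [← orderOf_units, Units.val_mk0, ← hα.eq_orderOf, Units.ext_iff, Units.val_pow_eq_pow_val,
    Units.val_pow_eq_pow_val, Units.val_mk0] at h

lemma exists_pow_eq_of_ne_zero {y : F} (hy : y ≠ 0) :
    ∃ n < Fintype.card F - 1, α ^ n = y :=
  have : NeZero (Fintype.card F - 1) := ⟨by have := Fintype.one_lt_card (α := F); omega⟩
  hα.eq_pow_of_pow_eq_one (FiniteField.pow_card_sub_one_eq_one y hy)

lemma eq_zero_or_exists_pow_eq (y : F) : y = 0 ∨ ∃ n : ℕ, α ^ n = y :=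
  or_iff_not_imp_left.mpr fun hy ↦ (exists_pow_eq_of_ne_zero hα hy).imp fun _ ↦ And.right

lemma pow_half_card_sub_one (hF : Odd (Fintype.card F)) : α ^ ((Fintype.card F - 1) / 2) = -1 := by
  have := Fintype.one_lt_card (α := F)
  refine (hα.pow (by omega) ?_).eq_neg_one_of_two_right
  have := Nat.odd_iff.mp hF
  omega

lemma sum_eq_add_sum_pow {M : Type*} [AddCommMonoid M] (g : F → M) :
    ∑ y, g y = g 0 + ∑ n ∈ range (Fintype.card F - 1), g (α ^ n) := by
  classical
  have himage : (range (Fintype.card F - 1)).image (α ^ ·) = univ.erase 0 := by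
    ext y
    simp only [mem_image, mem_range, mem_erase, mem_univ, and_true]
    refine ⟨?_, exists_pow_eq_of_ne_zero hα⟩
    rintro ⟨n, -, rfl⟩
    exact pow_ne_zero _ (primitiveRoot_ne_zero hα)
  rw [← add_sum_erase _ _ (mem_univ (0 : F)), ← himage, sum_image hα.injOn_pow]

lemma sum_eq_add_nsmul_of_invariant {M : Type*} [AddCommMonoid M] {g : F → M} {e : ℕ}
    (he : e ∣ Fintype.card F - 1) (hg : ∀ y, g (α ^ e * y) = g y) :
    ∑ y, g y = g 0 + ((Fintype.card F - 1) / e) • ∑ n ∈ range e, g (α ^ n) := by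
  have hperiodic : Function.Periodic (fun n ↦ g (α ^ n)) e := fun n ↦ by
    simp only [add_comm n, pow_add, hg]
  rw [sum_eq_add_sum_pow hα, ← sum_range_mul_of_periodic hperiodic, Nat.div_mul_cancel he]

end

end PrimitiveRoots

section CyclotomicClasses

variable {F : Type*} [Field F] [Fintype F] [DecidableEq F] {α : F} {e : ℕ}

lemma cycClass_image_mul (α : F) (e i k : ℕ) :
    (cycClass α e i).image (α ^ k * ·) = cycClass α e (k + i) := by
  simp only [cycClass, image_image, Function.comp_def]
  exact image_congr fun j _ ↦ by ring

section

variable (hα : IsPrimitiveRoot α (Fintype.card F - 1))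
include hα

lemma zero_notMem_cycClass (e i : ℕ) : (0 : F) ∉ cycClass α e i := by
  simp [cycClass, primitiveRoot_ne_zero hα]

lemma pow_mem_cycClass_iff (he : e ∣ Fintype.card F - 1) {i n : ℕ} :
    α ^ n ∈ cycClass α e i ↔ n ≡ i [MOD e] := by
  simp only [cycClass, mem_image, mem_range, pow_eq_pow_iff_modEq_card hα]
  constructor
  · rintro ⟨j, -, hj⟩
    simpa [Nat.ModEq] using (hj.of_dvd he).symm
  · intro hn
    have hF := Fintype.one_lt_card (α := F)
    have hi : i ≤ n + (Fintype.card F - 1) * i :=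
      le_add_left (Nat.le_mul_of_pos_left i (by omega))
    have hni : i ≡ n + (Fintype.card F - 1) * i [MOD e] :=
      hn.symm.trans (Nat.modEq_zero_iff_dvd.mpr (he.mul_right i) |>.add_left n).symm
    obtain ⟨j, hj⟩ := (Nat.modEq_iff_dvd' hi).mp hni
    refine ⟨j % (Fintype.card F - 1), (Nat.mod_lt _ (by omega)).trans (by omega), ?_⟩
    calc e * (j % (Fintype.card F - 1)) + i ≡ e * j + i [MOD Fintype.card F - 1] :=
          ((Nat.mod_modEq j _).mul_left e).add_right i
      _ = n + (Fintype.card F - 1) * i := by omega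
      _ ≡ n [MOD Fintype.card F - 1] := by simp [Nat.ModEq]

lemma cycClass_congr (he : e ∣ Fintype.card F - 1) {i j : ℕ} (hij : i ≡ j [MOD e]) :
    cycClass α e i = cycClass α e j := by
  ext y
  obtain rfl | ⟨n, rfl⟩ := eq_zero_or_exists_pow_eq hα y
  · simp [zero_notMem_cycClass hα]
  · rw [pow_mem_cycClass_iff hα he, pow_mem_cycClass_iff hα he]
    exact ⟨(·.trans hij), (·.trans hij.symm)⟩

lemma pow_mul_mem_cycClass_iff (he : e ∣ Fintype.card F - 1) {i k : ℕ} (hk : e ∣ k) (y : F) :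
    α ^ k * y ∈ cycClass α e i ↔ y ∈ cycClass α e i := by
  obtain rfl | ⟨n, rfl⟩ := eq_zero_or_exists_pow_eq hα y
  · simp
  · rw [← pow_add, pow_mem_cycClass_iff hα he, pow_mem_cycClass_iff hα he]
    simp [Nat.ModEq, Nat.add_mod, Nat.mod_eq_zero_of_dvd hk]

lemma card_cycClass (he : e ∣ Fintype.card F - 1) (i : ℕ) :
    #(cycClass α e i) = (Fintype.card F - 1) / e := by
  have he0 : 0 < e := Nat.pos_of_dvd_of_pos he (by have := Fintype.one_lt_card (α := F); omega)
  have hsum := sum_eq_add_nsmul_of_invariant hα he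
    (g := fun y ↦ if y ∈ cycClass α e i then 1 else 0)
    (by simp [pow_mul_mem_cycClass_iff hα he dvd_rfl])
  have hclass : {n ∈ range e | n ≡ i [MOD e]} = {i % e} := by
    ext n
    simp only [mem_filter, mem_range, mem_singleton]
    refine ⟨fun ⟨hn, h⟩ ↦ by rw [← h, Nat.mod_eq_of_lt hn], ?_⟩
    rintro rfl
    exact ⟨Nat.mod_lt i he0, Nat.mod_modEq i e⟩
  simpa [pow_mem_cycClass_iff hα he, zero_notMem_cycClass hα, hclass, ← card_filter] using hsum

lemma disjoint_cycClass (he : e ∣ Fintype.card F - 1) {i j : ℕ} (hij : ¬ i ≡ j [MOD e]) :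
    Disjoint (cycClass α e i) (cycClass α e j) := by
  refine disjoint_left.mpr fun y hi hj ↦ ?_
  obtain rfl | ⟨n, rfl⟩ := eq_zero_or_exists_pow_eq hα y
  · exact zero_notMem_cycClass hα e i hi
  · rw [pow_mem_cycClass_iff hα he] at hi hj
    exact hij (hi.symm.trans hj)

end

end CyclotomicClasses

section QuadraticExtension

variable {K F : Type*} [Field K] [Fintype K] [Field F] [Fintype F] [Algebra K F] {α : F}

lemma card_sub_one_of_finrank_eq_two (hKF : Module.finrank K F = 2) :
    Fintype.card F - 1 = (Fintype.card K + 1) * (Fintype.card K - 1) := by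
  rw [Module.card_eq_pow_finrank (K := K), hKF]
  simpa using Nat.sq_sub_sq (Fintype.card K) 1

lemma exists_algebraMap_eq_pow (hKF : Module.finrank K F = 2)
    (hα : IsPrimitiveRoot α (Fintype.card F - 1)) {c : K} (hc : c ≠ 0) :
    ∃ j, algebraMap K F c = α ^ ((Fintype.card K + 1) * j) := by
  obtain ⟨n, -, hn⟩ := exists_pow_eq_of_ne_zero hα ((map_ne_zero (algebraMap K F)).mpr hc)
  have hdvd : Fintype.card F - 1 ∣ n * (Fintype.card K - 1) := by
    rw [← hα.pow_eq_one_iff_dvd, pow_mul, hn, ← map_pow,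
      FiniteField.pow_card_sub_one_eq_one c hc, map_one]
  rw [card_sub_one_of_finrank_eq_two hKF] at hdvd
  have hK := Fintype.one_lt_card (α := K)
  obtain ⟨j, rfl⟩ := Nat.dvd_of_mul_dvd_mul_right (by omega) hdvd
  exact ⟨j, hn.symm⟩

lemma isSemiInvariant_indicator_cycClass [DecidableEq F] {e : ℕ} (hKF : Module.finrank K F = 2)
    (hα : IsPrimitiveRoot α (Fintype.card F - 1)) (he : e ∣ Fintype.card K + 1) (i : ℕ) :
    IsSemiInvariant (1 : MulChar K ℤ) ((cycClass α e i : Set F).indicator 1) := by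
  intro c y
  obtain rfl | hc := eq_or_ne c 0
  · simp [zero_notMem_cycClass hα, MulChar.map_zero]
  · obtain ⟨j, hj⟩ := exists_algebraMap_eq_pow hKF hα hc
    have heF : e ∣ Fintype.card F - 1 :=
      card_sub_one_of_finrank_eq_two (K := K) hKF ▸ he.mul_right _
    simp only [Set.indicator_apply, mem_coe, Pi.one_apply, MulChar.one_apply hc.isUnit, one_mul,
      Algebra.smul_def, hj, pow_mul_mem_cycClass_iff hα heF (he.mul_right j)]

lemma card_cycClass_of_dvd_card_add_one [DecidableEq F] {s e : ℕ}
    (hKF : Module.finrank K F = 2) (hα : IsPrimitiveRoot α (Fintype.card F - 1))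
    (hse : Fintype.card K + 1 = s * e) (i : ℕ) :
    #(cycClass α e i) = s * (Fintype.card K - 1) := by
  have hF := card_sub_one_of_finrank_eq_two (F := F) hKF
  have he0 : 0 < e := Nat.pos_of_ne_zero (by rintro rfl; simp at hse)
  rw [card_cycClass hα (hF ▸ hse ▸ (dvd_mul_left e s).mul_right _), hF, hse, mul_right_comm,
    Nat.mul_div_cancel _ he0]

lemma autocorr_indicator_cycClass [DecidableEq F] {s e : ℕ} (hKF : Module.finrank K F = 2)
    (hα : IsPrimitiveRoot α (Fintype.card F - 1)) (hse : Fintype.card K + 1 = s * e) (i : ℕ)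
    {d : F} (hd : d ≠ 0) :
    autocorr ((cycClass α e i : Set F).indicator (1 : F → ℤ)) d =
      if d ∈ cycClass α e i then (Fintype.card K - 1 + (s - 1) ^ 2 - s : ℤ) else s ^ 2 - s := by
  have hsum : ∑ y, (cycClass α e i : Set F).indicator (1 : F → ℤ) y =
      s * (Fintype.card K - 1) := by
    simp only [Set.indicator_apply, mem_coe, Pi.one_apply, sum_boole, filter_univ_mem,
      card_cycClass_of_dvd_card_add_one hKF hα hse i]
    rw [Nat.cast_mul, Nat.cast_pred Fintype.card_pos]
  have hsq (y : F) : (cycClass α e i : Set F).indicator (1 : F → ℤ) y ^ 2 =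
      (cycClass α e i : Set F).indicator 1 y := by
    by_cases hy : y ∈ cycClass α e i <;> simp [hy]
  rw [(isSemiInvariant_indicator_cycClass hKF hα (hse ▸ dvd_mul_left e s) i).autocorr_of_one hKF
    (by simpa only [hsq] using hsum) hsum hd]
  by_cases hdi : d ∈ cycClass α e i <;> simp [hdi]

end QuadraticExtension

section OcticSign

variable {F : Type*} [Field F] [Fintype F] [DecidableEq F] {α : F}

/-- The function `α ^ n ↦ χ₈ n` on a finite field, extended by `0` to the origin. Its
negative part is the indicator function of `C_3^8 ∪ C_5^8`. -/
def octicSign (α y : F) : ℤ :=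
  if y ∈ cycClass α 8 1 ∪ cycClass α 8 7 then 1
  else if y ∈ cycClass α 8 3 ∪ cycClass α 8 5 then -1 else 0

section

variable (hα : IsPrimitiveRoot α (Fintype.card F - 1))
include hα

lemma octicSign_zero : octicSign α 0 = 0 := by
  simp [octicSign, zero_notMem_cycClass hα]

section

variable (h8 : 8 ∣ Fintype.card F - 1)
include h8

lemma octicSign_pow (n : ℕ) : octicSign α (α ^ n) = ZMod.χ₈ n := by
  simp only [octicSign, mem_union, pow_mem_cycClass_iff hα h8, Nat.ModEq,
    ZMod.χ₈_nat_eq_if_mod_eight]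
  grind

lemma octicSign_apply_pow (y : F) (k : ℕ) : octicSign α (y ^ k) = ZMod.χ₈ k * octicSign α y := by
  obtain rfl | ⟨n, rfl⟩ := eq_zero_or_exists_pow_eq hα y
  · cases k with
    | zero => simpa [octicSign_zero hα] using octicSign_pow hα h8 0
    | succ k => simp [octicSign_zero hα]
  · rw [← pow_mul, octicSign_pow hα h8, octicSign_pow hα h8, mul_comm, Nat.cast_mul, map_mul]

lemma octicSign_pow_four_mul_mul (k : ℕ) (y : F) :
    octicSign α (α ^ (4 * k) * y) = (-1) ^ k * octicSign α y := by
  have hχ : ∀ a : ZMod 8, ZMod.χ₈ (4 + a) = -ZMod.χ₈ a := by decide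
  have hstep (z : F) : octicSign α (α ^ 4 * z) = -octicSign α z := by
    obtain rfl | ⟨n, rfl⟩ := eq_zero_or_exists_pow_eq hα z
    · simp [octicSign_zero hα]
    · rw [← pow_add, octicSign_pow hα h8, octicSign_pow hα h8, Nat.cast_add, ← hχ, Nat.cast_ofNat]
  induction k with
  | zero => simp
  | succ k ih => rw [mul_add_one, pow_add, mul_right_comm, mul_comm, hstep, ih, pow_succ]; ring

lemma two_mul_indicator_cycClass_union (y : F) :
    2 * ((cycClass α 8 3 ∪ cycClass α 8 5 : Finset F) : Set F).indicator 1 y =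
      octicSign α y ^ 2 - octicSign α y := by
  have hdisj : Disjoint (cycClass α 8 1 ∪ cycClass α 8 7) (cycClass α 8 3 ∪ cycClass α 8 5) := by
    simp only [disjoint_union_left, disjoint_union_right]
    refine ⟨⟨?_, ?_⟩, ?_, ?_⟩ <;> exact disjoint_cycClass hα h8 (by decide)
  by_cases hy : y ∈ cycClass α 8 3 ∪ cycClass α 8 5
  · rw [octicSign, if_neg (disjoint_right.mp hdisj hy), if_pos hy,
      Set.indicator_of_mem (mem_coe.mpr hy)]
    norm_num
  · rw [octicSign, if_neg hy, Set.indicator_of_notMem (mem_coe.not.mpr hy)]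
    split_ifs <;> norm_num

lemma autocorr_octicSign_pow_four_mul_mul (k : ℕ) (d : F) :
    autocorr (octicSign α) (α ^ (4 * k) * d) = autocorr (octicSign α) d :=
  autocorr_apply_addEquiv (ε := (-1) ^ k) (by rw [← pow_mul, mul_comm, pow_mul]; simp)
    (LinearEquiv.smulOfNeZero F F (α ^ (4 * k))
      (pow_ne_zero _ (primitiveRoot_ne_zero hα))).toAddEquiv
    (octicSign_pow_four_mul_mul hα h8 k) d

lemma autocorr_octicSign_pow_congr {m n : ℕ} (hmn : m ≡ n [MOD 4]) :
    autocorr (octicSign α) (α ^ m) = autocorr (octicSign α) (α ^ n) := by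
  have hmod (n : ℕ) :
      autocorr (octicSign α) (α ^ n) = autocorr (octicSign α) (α ^ (n % 4)) := by
    conv_lhs => rw [← Nat.div_add_mod n 4, pow_add]
    exact autocorr_octicSign_pow_four_mul_mul hα h8 _ _
  rw [hmod m, hmod n, hmn]

lemma sum_octicSign : ∑ y, octicSign α y = 0 := by
  have hχ : ∑ n ∈ range 8, ZMod.χ₈ (n : ℕ) = 0 := by decide
  have hinv (y : F) : octicSign α (α ^ 8 * y) = octicSign α y := by
    simpa using octicSign_pow_four_mul_mul hα h8 2 y
  rw [sum_eq_add_nsmul_of_invariant hα h8 hinv]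
  simp only [octicSign_pow hα h8, octicSign_zero hα, hχ, smul_zero, add_zero]

lemma sum_octicSign_sq : ∑ y, octicSign α y ^ 2 = ((Fintype.card F - 1) / 2 : ℕ) := by
  have hχ : ∑ n ∈ range 8, ZMod.χ₈ (n : ℕ) ^ 2 = 4 := by decide
  have hinv (y : F) : octicSign α (α ^ 8 * y) ^ 2 = octicSign α y ^ 2 := by
    simpa using congrArg (· ^ 2) (octicSign_pow_four_mul_mul hα h8 2 y)
  rw [sum_eq_add_nsmul_of_invariant hα h8 hinv]
  simp only [octicSign_pow hα h8, octicSign_zero hα, hχ, nsmul_eq_mul]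
  omega

lemma sum_autocorr_octicSign_pow :
    ∑ n ∈ range 4, autocorr (octicSign α) (α ^ n) = -2 := by
  have hinv := sum_eq_add_nsmul_of_invariant hα (dvd_trans (by decide) h8)
    (autocorr_octicSign_pow_four_mul_mul hα h8 1)
  have hF := Fintype.one_lt_card (α := F)
  have hhalf : (Fintype.card F - 1) / 2 = 2 * ((Fintype.card F - 1) / 4) := by omega
  have hpos : (((Fintype.card F - 1) / 4 : ℕ) : ℤ) ≠ 0 := by omega
  rw [sum_autocorr, sum_octicSign hα h8, autocorr_zero, sum_octicSign_sq hα h8, mul_one,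
    hhalf, nsmul_eq_mul] at hinv
  apply mul_left_cancel₀ hpos
  push_cast at hinv ⊢
  linarith

end

lemma octicSign_odd (hF : Fintype.card F % 16 = 9) : (octicSign α).Odd := fun y ↦ by
  obtain ⟨k, hk⟩ : ∃ k, (Fintype.card F - 1) / 2 = 4 * (2 * k + 1) :=
    ⟨(Fintype.card F - 9) / 16, by omega⟩
  rw [← neg_one_mul, ← pow_half_card_sub_one hα (Nat.odd_iff.mpr (by omega)), hk,
    octicSign_pow_four_mul_mul hα (by omega), (odd_two_mul_add_one k).neg_one_pow, neg_one_mul]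

end

end OcticSign

section OcticSignQuadraticExtension

variable {K F : Type*} [Field K] [Fintype K] [Field F] [Fintype F] [Algebra K F] {α : F}

lemma quadraticChar_eq_neg_one_pow [DecidableEq K] (hKF : Module.finrank K F = 2)
    (hα : IsPrimitiveRoot α (Fintype.card F - 1)) (hK : ringChar K ≠ 2) {c : K} {j : ℕ}
    (hj : algebraMap K F c = α ^ ((Fintype.card K + 1) * j)) :
    quadraticChar K c = (-1) ^ j := by
  have hKodd := FiniteField.odd_card_of_char_ne_two hK
  have hF := card_sub_one_of_finrank_eq_two (F := F) hKF
  have hFodd : Odd (Fintype.card F) := by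
    rw [Module.card_eq_pow_finrank (K := K)]
    exact (Nat.odd_iff.mpr hKodd).pow
  have hcast : ((quadraticChar K c : ℤ) : K) = ((-1 : ℤ) ^ j : ℤ) := by
    apply (algebraMap K F).injective
    have hexp : (Fintype.card K + 1) * j * (Fintype.card K / 2) = (Fintype.card F - 1) / 2 * j := by
      rw [hF, show Fintype.card K - 1 = 2 * (Fintype.card K / 2) by omega, mul_left_comm,
        Nat.mul_div_cancel_left _ two_pos, mul_right_comm]
    rw [quadraticChar_eq_pow_of_char_ne_two' hK, map_pow, hj, ← pow_mul, hexp, pow_mul,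
      pow_half_card_sub_one hα hFodd]
    simp
  refine Int.cast_injOn_of_ringChar_ne_two hK ?_ ?_ hcast
  · rcases quadraticChar_isQuadratic K c with h | h | h <;> simp [h]
  · rcases neg_one_pow_eq_or ℤ j with h | h <;> simp [h]

lemma card_mod_sixteen_of_finrank_eq_two (hKF : Module.finrank K F = 2)
    (hK : Fintype.card K % 8 = 3) : Fintype.card F % 16 = 9 := by
  rw [Module.card_eq_pow_finrank (K := K), hKF]
  obtain ⟨t, ht⟩ : ∃ t, Fintype.card K = 8 * t + 3 := ⟨Fintype.card K / 8, by omega⟩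
  rw [ht]
  ring_nf
  omega

variable (K) in
/-- A power of the primitive element `α` of `F` that has trace `0` over `K` when `[F : K] = 2`. -/
def traceZeroPow (α : F) : F := α ^ ((Fintype.card K + 1) / 2)

lemma traceZeroPow_pow_card (hKF : Module.finrank K F = 2)
    (hα : IsPrimitiveRoot α (Fintype.card F - 1)) (hK : Odd (Fintype.card K)) :
    traceZeroPow K α ^ Fintype.card K = -traceZeroPow K α := by
  have hFodd : Odd (Fintype.card F) := by
    rw [Module.card_eq_pow_finrank (K := K)]
    exact hK.pow
  obtain ⟨k, hk⟩ := hK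
  have hF := card_sub_one_of_finrank_eq_two (F := F) hKF
  have hexp : (Fintype.card K + 1) / 2 * Fintype.card K =
      (Fintype.card F - 1) / 2 + (Fintype.card K + 1) / 2 := by
    rw [hF, hk, show 2 * k + 1 + 1 = 2 * (k + 1) by ring, mul_assoc,
      Nat.mul_div_cancel_left _ two_pos, Nat.mul_div_cancel_left _ two_pos, Nat.add_sub_cancel]
    ring
  rw [traceZeroPow, ← pow_mul, hexp, pow_add, pow_half_card_sub_one hα hFodd, neg_one_mul]

lemma linearIndependent_mul_traceZeroPow (hKF : Module.finrank K F = 2)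
    (hα : IsPrimitiveRoot α (Fintype.card F - 1)) (hK : ringChar K ≠ 2) {d : F} (hd : d ≠ 0) :
    LinearIndependent K ![d, d * traceZeroPow K α] := by
  rw [LinearIndependent.pair_iff' hd]
  intro c hc
  rw [Algebra.smul_def, mul_comm, mul_right_inj' hd] at hc
  have hneg := traceZeroPow_pow_card hKF hα
    (Nat.odd_iff.mpr (FiniteField.odd_card_of_char_ne_two hK))
  rw [← hc, ← map_pow, FiniteField.pow_card, ← map_neg, (algebraMap K F).injective.eq_iff,
    eq_comm, Ring.eq_self_iff_eq_zero_of_char_ne_two hK] at hneg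
  have hzero : traceZeroPow K α = 0 := by rw [← hc, hneg, map_zero]
  exact pow_ne_zero _ (primitiveRoot_ne_zero hα) hzero

variable [DecidableEq F] (hKF : Module.finrank K F = 2)
  (hα : IsPrimitiveRoot α (Fintype.card F - 1)) (hK : Fintype.card K % 8 = 3)

include hKF hα hK

lemma isSemiInvariant_octicSign [DecidableEq K] :
    IsSemiInvariant (quadraticChar K) (octicSign α) := by
  intro c y
  obtain rfl | hc := eq_or_ne c 0
  · simp [octicSign_zero hα]
  · obtain ⟨j, hj⟩ := exists_algebraMap_eq_pow hKF hα hc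
    obtain ⟨k, hk⟩ : ∃ k, Fintype.card K + 1 = 4 * (2 * k + 1) := ⟨Fintype.card K / 8, by omega⟩
    have hF := card_mod_sixteen_of_finrank_eq_two (F := F) hKF hK
    have hchar : ringChar K ≠ 2 := mt FiniteField.even_card_iff_char_two.mp (by omega)
    rw [Algebra.smul_def, hj, quadraticChar_eq_neg_one_pow hKF hα hchar hj, hk, mul_assoc,
      octicSign_pow_four_mul_mul hα (by omega), pow_mul, (odd_two_mul_add_one k).neg_one_pow]

lemma octicSign_pow_card (y : F) : octicSign α (y ^ Fintype.card K) = -octicSign α y := by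
  have hF := card_mod_sixteen_of_finrank_eq_two (F := F) hKF hK
  rw [octicSign_apply_pow hα (by omega), ZMod.χ₈_nat_mod_eight, hK]
  simp [show ZMod.χ₈ 3 = -1 by decide]

lemma autocorr_octicSign_pow_card (d : F) :
    autocorr (octicSign α) (d ^ Fintype.card K) = autocorr (octicSign α) d := by
  have := Module.finite_of_finrank_pos (hKF ▸ two_pos)
  have hfrob := FiniteField.coe_frobeniusAlgEquivOfAlgebraic K F
  have hsign (y : F) : octicSign α (FiniteField.frobeniusAlgEquivOfAlgebraic K F y) =
      -1 * octicSign α y := by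
    rw [hfrob, octicSign_pow_card hKF hα hK, neg_one_mul]
  rw [← autocorr_apply_addEquiv (by norm_num)
    (FiniteField.frobeniusAlgEquivOfAlgebraic K F).toAddEquiv hsign d]
  exact congrArg (autocorr (octicSign α)) (congrFun hfrob d).symm

lemma two_mul_autocorr_octicSign {d w : F} (hdw : LinearIndependent K ![d, w]) :
    2 * autocorr (octicSign α) d =
      2 * lineSum K (octicSign α) w d ^ 2 - (Fintype.card K + 1) := by
  classical
  have hF := card_mod_sixteen_of_finrank_eq_two (F := F) hKF hK
  have hchar : ringChar K ≠ 2 := mt FiniteField.even_card_iff_char_two.mp (by omega)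
  have hcard : (2 : ℤ) * ((Fintype.card F - 1) / 2 : ℕ) =
      (Fintype.card K + 1) * (Fintype.card K - 1) := by
    have := card_sub_one_of_finrank_eq_two (F := F) hKF
    zify [Fintype.card_pos.nat_succ_le, Fintype.card_pos (α := K)] at this
    omega
  have hpos : (Fintype.card K - 1 : ℤ) ≠ 0 := by omega
  have key := (isSemiInvariant_octicSign hKF hα hK).autocorr_zero_add_of_ne_one
    (quadraticChar_isQuadratic K).sq_eq_one (quadraticChar_ne_one hchar) hKF hdw
  rw [autocorr_zero, sum_octicSign_sq hα (by omega)] at key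
  apply mul_left_cancel₀ hpos
  linear_combination 2 * key - hcard

-- The Frobenius map reverses the line and changes the sign of `octicSign α`.
lemma lineSum_octicSign_traceZeroPow :
    lineSum K (octicSign α) (traceZeroPow K α * traceZeroPow K α) (traceZeroPow K α) = 0 := by
  have hodd : Odd (Fintype.card K) := Nat.odd_iff.mpr (by omega)
  have := Module.finite_of_finrank_pos (hKF ▸ two_pos)
  set τ := traceZeroPow K α
  have hτ : τ ^ Fintype.card K = -τ := traceZeroPow_pow_card hKF hα hodd
  have hfrob (c : K) : (τ * τ + -c • τ) ^ Fintype.card K = τ * τ + c • τ := by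
    rw [← congrFun (FiniteField.coe_frobeniusAlgEquivOfAlgebraic K F), map_add, map_mul, map_smul,
      FiniteField.coe_frobeniusAlgEquivOfAlgebraic]
    simp [hτ]
  have hneg : lineSum K (octicSign α) (τ * τ) τ = -lineSum K (octicSign α) (τ * τ) τ := by
    conv_rhs => rw [lineSum, ← Equiv.sum_comp (Equiv.neg K), ← sum_neg_distrib]
    refine Fintype.sum_congr _ _ fun c ↦ ?_
    rw [Equiv.neg_apply, ← octicSign_pow_card hKF hα hK, hfrob]
  omega

lemma two_mul_autocorr_octicSign_pow_two :
    2 * autocorr (octicSign α) (α ^ 2) = -(Fintype.card K + 1) := by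
  have hF := card_mod_sixteen_of_finrank_eq_two (F := F) hKF hK
  have hchar : ringChar K ≠ 2 := mt FiniteField.even_card_iff_char_two.mp (by omega)
  have hmod : 2 ≡ (Fintype.card K + 1) / 2 [MOD 4] := by rw [Nat.ModEq]; omega
  have hτ : traceZeroPow K α ≠ 0 := pow_ne_zero _ (primitiveRoot_ne_zero hα)
  rw [autocorr_octicSign_pow_congr hα (by omega) hmod, ← traceZeroPow,
    two_mul_autocorr_octicSign hKF hα hK (linearIndependent_mul_traceZeroPow hKF hα hchar hτ),
    lineSum_octicSign_traceZeroPow hKF hα hK]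
  ring

lemma autocorr_octicSign_pow_three :
    autocorr (octicSign α) (α ^ 3) = autocorr (octicSign α) α := by
  have hF := card_mod_sixteen_of_finrank_eq_two (F := F) hKF hK
  have hmod : 3 ≡ Fintype.card K [MOD 4] := by rw [Nat.ModEq]; omega
  rw [autocorr_octicSign_pow_congr hα (by omega) hmod, autocorr_octicSign_pow_card hKF hα hK]

lemma lineSum_sq_add_two_mul_lineSum_sq :
    lineSum K (octicSign α) (traceZeroPow K α) 1 ^ 2 +
      2 * lineSum K (octicSign α) (α * traceZeroPow K α) α ^ 2 = 2 * Fintype.card K := by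
  have hF := card_mod_sixteen_of_finrank_eq_two (F := F) hKF hK
  have hchar : ringChar K ≠ 2 := mt FiniteField.even_card_iff_char_two.mp (by omega)
  have hone := two_mul_autocorr_octicSign hKF hα hK
    (linearIndependent_mul_traceZeroPow hKF hα hchar one_ne_zero)
  have halpha := two_mul_autocorr_octicSign hKF hα hK
    (linearIndependent_mul_traceZeroPow hKF hα hchar (primitiveRoot_ne_zero hα))
  have hsum := sum_autocorr_octicSign_pow hα (by omega)
  simp only [sum_range_succ, range_zero, sum_empty, pow_zero, pow_one,
    autocorr_octicSign_pow_three hKF hα hK] at hsum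
  rw [one_mul] at hone
  have htwo := two_mul_autocorr_octicSign_pow_two hKF hα hK
  linarith

end OcticSignQuadraticExtension

section Arithmetic

lemma pow_two_mul_add_one_mod_eight {p : ℕ} (hp8 : p % 8 = 3) (k : ℕ) :
    p ^ (2 * k + 1) % 8 = 3 := by
  rw [pow_succ, pow_mul, Nat.mul_mod, Nat.pow_mod, Nat.pow_mod p, hp8]
  simp

lemma eq_neg_and_exists_one_add_two_mul_sq_eq {P x a b : ℤ} (hP : 0 < P) (hx : x ^ 2 = P ^ 2)
    (hab : P ^ 2 = a ^ 2 + 2 * b ^ 2) (hxa : x + a = -2) :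
    x = -P ∧ ∃ w, 1 + 2 * w ^ 2 = P := by
  obtain rfl : a = -2 - x := by linarith
  obtain rfl | rfl := sq_eq_sq_iff_eq_or_eq_neg.mp hx
  · nlinarith [sq_nonneg b]
  · have hb : b ^ 2 = 2 * (P - 1) := by linarith
    obtain ⟨w, rfl⟩ := (Int.even_pow.mp ⟨P - 1, hb.trans (two_mul _)⟩).1.two_dvd
    exact ⟨rfl, w, by linarith⟩

lemma sq_eq_sq_of_dvd_mul_sub_mul {n : ℤ} (hn : 2 ≤ n) {N X Y Z W : ℤ} (hN : 0 < N)
    (hXY : X ^ 2 + n * Y ^ 2 = N) (hZW : Z ^ 2 + n * W ^ 2 = N) (hdvd : N ∣ X * W - Y * Z) :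
    X ^ 2 = Z ^ 2 := by
  obtain ⟨k, hk⟩ := hdvd
  have brahmagupta : N ^ 2 = (X * Z + n * (Y * W)) ^ 2 + n * (N * k) ^ 2 := by
    rw [← hk]
    linear_combination (-N) * hXY - (X ^ 2 + n * Y ^ 2) * hZW
  have hk0 : k = 0 := by
    by_contra hk0
    have hk1 : 0 < k ^ 2 := sq_pos_of_ne_zero hk0
    nlinarith [sq_nonneg (X * Z + n * (Y * W)), mul_pos hN hN]
  rw [hk0, mul_zero, sub_eq_zero] at hk
  apply mul_left_cancel₀ hN.ne'
  linear_combination (-X ^ 2) * hZW + Z ^ 2 * hXY + n * (X * W + Y * Z) * hk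

-- `(XW - YZ)(XW + YZ)` is divisible by `p ^ r`, and `p` divides only one of the two factors.
lemma sq_eq_sq_of_sq_add_mul_sq_eq_prime_pow {n : ℤ} (hn : 2 ≤ n) {p r : ℕ} (hp : p.Prime)
    (hp2 : p ≠ 2) {X Y Z W : ℤ} (hXY : X ^ 2 + n * Y ^ 2 = (p : ℤ) ^ r)
    (hZW : Z ^ 2 + n * W ^ 2 = (p : ℤ) ^ r) (hY : ¬ (p : ℤ) ∣ Y) (hZ : ¬ (p : ℤ) ∣ Z) :
    X ^ 2 = Z ^ 2 := by
  have hpZ : Prime (p : ℤ) := Nat.prime_iff_prime_int.mp hp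
  have hN : (0 : ℤ) < (p : ℤ) ^ r := pow_pos (by exact_mod_cast hp.pos) r
  have hdvd : (p : ℤ) ^ r ∣ (X * W - Y * Z) * (X * W + Y * Z) :=
    ⟨W ^ 2 - Y ^ 2, by linear_combination W ^ 2 * hXY - Y ^ 2 * hZW⟩
  by_cases hsub : (p : ℤ) ∣ X * W - Y * Z
  · have hadd : ¬ (p : ℤ) ∣ X * W + Y * Z := fun hadd ↦ by
      have h2YZ : (p : ℤ) ∣ 2 * (Y * Z) := by
        rw [show 2 * (Y * Z) = X * W + Y * Z - (X * W - Y * Z) by ring]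
        exact dvd_sub hadd hsub
      rcases hpZ.dvd_or_dvd h2YZ with h2 | hYZ
      · exact hp2 ((Nat.prime_dvd_prime_iff_eq hp Nat.prime_two).mp (by exact_mod_cast h2))
      · exact (hpZ.dvd_or_dvd hYZ).elim hY hZ
    exact sq_eq_sq_of_dvd_mul_sub_mul hn hN hXY hZW
      (((hpZ.coprime_iff_not_dvd.mpr hadd).pow_left).dvd_of_dvd_mul_right hdvd)
  · refine sq_eq_sq_of_dvd_mul_sub_mul (Y := -Y) hn hN (by rwa [neg_sq]) hZW ?_
    rw [neg_mul, sub_neg_eq_add]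
    exact ((hpZ.coprime_iff_not_dvd.mpr hsub).pow_left).dvd_of_dvd_mul_left hdvd

lemma not_dvd_choose_add_mul {p : ℕ} (hp : p.Prime) {n k a b : ℕ} (ha : a < p) (hba : b ≤ a)
    (h : ¬ p ∣ n.choose k) : ¬ p ∣ (a + p * n).choose (b + p * k) := by
  have := Fact.mk hp
  have hb := hba.trans_lt ha
  have lucas := Choose.choose_modEq_choose_mod_mul_choose_div_nat (p := p) (n := a + p * n)
    (k := b + p * k)
  simp only [Nat.add_mul_mod_self_left, Nat.mod_eq_of_lt, ha, hb, Nat.add_mul_div_left _ _ hp.pos,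
    Nat.div_eq_of_lt, zero_add] at lucas
  rw [lucas.dvd_iff dvd_rfl, hp.dvd_mul, not_or]
  refine ⟨fun hdvd ↦ ?_, h⟩
  have : p ∣ a.factorial := by
    rw [← Nat.choose_mul_factorial_mul_factorial hba]
    exact (hdvd.mul_right _).mul_right _
  exact ha.not_ge (hp.dvd_factorial.mp this)

-- In base `p = 8s + 3` the digits of `4t + 1` are all `4s + 1`, and those of `t` alternate between
-- `s` and `3s + 1`, so Lucas's theorem applies digit by digit.
lemma not_dvd_choose_of_pow_eq {p : ℕ} (hp : p.Prime) (hp8 : p % 8 = 3) (k : ℕ) {t : ℕ}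
    (ht : p ^ (2 * k + 1) = 8 * t + 3) : ¬ p ∣ (4 * t + 1).choose t := by
  obtain ⟨s, hs⟩ : ∃ s, p = 8 * s + 3 := ⟨p / 8, by omega⟩
  induction k generalizing t with
  | zero =>
    obtain rfl : t = s := by
      rw [mul_zero, zero_add, pow_one] at ht
      omega
    simpa using not_dvd_choose_add_mul hp (n := 0) (k := 0) (a := 4 * t + 1) (b := t)
      (by omega) (by omega) (by simpa using hp.one_lt.ne')
  | succ k ih =>
    have hpow8 := pow_two_mul_add_one_mod_eight hp8 k
    obtain ⟨t', ht'⟩ : ∃ t', p ^ (2 * k + 1) = 8 * t' + 3 :=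
      ⟨p ^ (2 * k + 1) / 8, by omega⟩
    have htt' : t = s + p * (3 * s + 1 + p * t') := by
      have : 8 * t + 3 = (8 * t' + 3) * p ^ 2 := by rw [← ht, ← ht']; ring
      rw [hs] at this ⊢
      linarith
    have h := not_dvd_choose_add_mul hp (a := 4 * s + 1) (b := s) (by omega) (by omega)
      (not_dvd_choose_add_mul hp (a := 4 * s + 1) (b := 3 * s + 1) (by omega) (by omega) (ih ht'))
    rw [← htt'] at h
    convert h using 3
    rw [htt', hs]
    ring

end Arithmetic

section LineSumEvaluation

lemma sum_pow_eq_ite {F : Type*} [Field F] [Fintype F] {k : ℕ} (hk : k ≠ 0) :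
    ∑ y : F, y ^ k = if Fintype.card F - 1 ∣ k then -1 else 0 := by
  classical
  rw [← FiniteField.sum_pow_units, Fintype.sum_eq_add_sum_subtype_ne _ 0, zero_pow hk, zero_add]
  exact (Equiv.sum_comp unitsEquivNeZero fun y : {y : F // y ≠ 0} ↦ (y : F) ^ k).symm

lemma sub_pow_succ_pow {R : Type*} [CommRing R] (y : R) (M : ℕ) :
    (y - y ^ (2 * M + 1)) ^ M =
      ∑ j ∈ range (M + 1), (-1) ^ j * M.choose j * y ^ (M * (2 * j + 1)) := by
  rw [show y - y ^ (2 * M + 1) = y * (-y ^ (2 * M) + 1) by ring, mul_pow, add_pow, mul_sum]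
  refine sum_congr rfl fun j _ ↦ ?_
  rw [neg_pow]
  ring

lemma sum_pow_mul_sub_pow {F : Type*} [Field F] [Fintype F] {M n : ℕ}
    (hF : Fintype.card F - 1 = M * n) (a : ℕ) :
    ∑ y : F, y ^ (M * a) * (y - y ^ (2 * M + 1)) ^ M =
      -∑ j ∈ range (M + 1) with n ∣ a + (2 * j + 1), (-1) ^ j * (M.choose j : F) := by
  have hM : 0 < M := Nat.pos_of_ne_zero fun hM ↦ by
    have := Fintype.one_lt_card (α := F)
    simp [hM] at hF
    omega
  simp only [sub_pow_succ_pow, mul_sum]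
  rw [sum_comm, sum_filter, ← sum_neg_distrib]
  refine sum_congr rfl fun j _ ↦ ?_
  calc ∑ y : F, y ^ (M * a) * ((-1) ^ j * M.choose j * y ^ (M * (2 * j + 1)))
      = (-1) ^ j * M.choose j * ∑ y : F, y ^ (M * (a + (2 * j + 1))) := by
        rw [mul_sum]
        exact sum_congr rfl fun y _ ↦ by ring
    _ = -if n ∣ a + (2 * j + 1) then (-1) ^ j * (M.choose j : F) else 0 := by
        simp only [sum_pow_eq_ite (by positivity : M * (a + (2 * j + 1)) ≠ 0), hF,
          Nat.mul_dvd_mul_iff_left hM]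
        split_ifs <;> simp

-- The quadratic Gauss sum of `χ₈`, for an arbitrary primitive eighth root of unity.
lemma pow_sub_pow_sub_pow_add_pow_eq_χ₈_mul {R : Type*} [CommRing R] {w : R} (hw : w ^ 4 = -1)
    (n : ℕ) :
    w ^ n - w ^ (3 * n) - w ^ (5 * n) + w ^ (7 * n) =
      ((ZMod.χ₈ n : ℤ) : R) * (2 * (w - w ^ 3)) := by
  have h8 : w ^ 8 = 1 := by linear_combination (w ^ 4 - 1) * hw
  have hmod (k : ℕ) : w ^ (k * n) = (w ^ (n % 8)) ^ k := by
    rw [mul_comm, pow_mul, pow_eq_pow_mod n h8]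
  nth_rw 1 [← one_mul n]
  rw [hmod, hmod, hmod, hmod, ZMod.χ₈_nat_mod_eight]
  have hn : n % 8 < 8 := Nat.mod_lt n (by norm_num)
  generalize n % 8 = r at hn
  interval_cases r <;> simp only [ZMod.χ₈_nat_eq_if_mod_eight] <;> grind

lemma filter_dvd_eq_singleton {n a i m : ℕ} (hi : i < m) (hai : a + (2 * i + 1) = n)
    (hn : a + (2 * m - 1) < 2 * n) :
    {j ∈ range m | n ∣ a + (2 * j + 1)} = {i} := by
  ext j
  simp only [mem_filter, mem_range, mem_singleton]
  constructor
  · rintro ⟨hj, hdvd⟩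
    have := Nat.eq_of_dvd_of_lt_two_mul (by omega) hdvd (by omega)
    omega
  · rintro rfl
    exact ⟨hi, hai ▸ dvd_rfl⟩

section

variable {F : Type*} [Field F] [Fintype F] [DecidableEq F] {α : F}

lemma intCast_octicSign_mul (hα : IsPrimitiveRoot α (Fintype.card F - 1)) {N : ℕ}
    (hF : Fintype.card F - 1 = 8 * N) (y : F) :
    (octicSign α y : F) * (2 * (α ^ N - (α ^ N) ^ 3)) =
      y ^ N - y ^ (3 * N) - y ^ (5 * N) + y ^ (7 * N) := by
  have hF1 := Fintype.one_lt_card (α := F)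
  obtain rfl | ⟨n, rfl⟩ := eq_zero_or_exists_pow_eq hα y
  · have hN : N ≠ 0 := by omega
    simp [octicSign_zero hα, hN]
  · have hw : (α ^ N) ^ 4 = -1 := by
      rw [← pow_mul, ← pow_half_card_sub_one hα (Nat.odd_iff.mpr (by omega))]
      congr 1
      omega
    rw [octicSign_pow hα ⟨N, hF⟩, ← pow_sub_pow_sub_pow_add_pow_eq_χ₈_mul hw n]
    ring_nf

-- Of the four powers of `y` in `intCast_octicSign_mul`, only the last two contribute, each by a
-- single binomial coefficient.
lemma sum_octicSign_mul_sub_pow (hα : IsPrimitiveRoot α (Fintype.card F - 1)) {t : ℕ}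
    (hF : Fintype.card F - 1 = (4 * t + 1) * (8 * (2 * t + 1))) {w : F}
    (hw : w = α ^ ((4 * t + 1) * (2 * t + 1))) :
    (∑ y, (octicSign α y : F) * (y - y ^ (2 * (4 * t + 1) + 1)) ^ (4 * t + 1)) * (w - w ^ 3) * 2 =
      (-1) ^ (t + 1) * (4 * t + 1).choose t * 2 := by
  set N := (4 * t + 1) * (2 * t + 1)
  have hsum (k : ℕ) : ∑ y : F, y ^ (k * N) * (y - y ^ (2 * (4 * t + 1) + 1)) ^ (4 * t + 1) =
      -∑ j ∈ range (4 * t + 1 + 1) with 8 * (2 * t + 1) ∣ k * (2 * t + 1) + (2 * j + 1),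
        (-1) ^ j * ((4 * t + 1).choose j : F) := by
    rw [mul_left_comm, sum_pow_mul_sub_pow hF]
  have hempty (k : ℕ) (hk : 0 < k) (hk3 : k ≤ 3) :
      {j ∈ range (4 * t + 1 + 1) | 8 * (2 * t + 1) ∣ k * (2 * t + 1) + (2 * j + 1)} = ∅ := by
    refine filter_eq_empty_iff.mpr fun j hj hdvd ↦ ?_
    have := Nat.le_of_dvd (by omega) hdvd
    have := mem_range.mp hj
    interval_cases k <;> omega
  have hone : ∑ y : F, y ^ N * (y - y ^ (2 * (4 * t + 1) + 1)) ^ (4 * t + 1) = 0 := by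
    rw [← one_mul N, hsum, hempty 1 (by norm_num) (by norm_num), sum_empty, neg_zero]
  have hthree : ∑ y : F, y ^ (3 * N) * (y - y ^ (2 * (4 * t + 1) + 1)) ^ (4 * t + 1) = 0 := by
    rw [hsum, hempty 3 (by norm_num) (by norm_num), sum_empty, neg_zero]
  have hfive : ∑ y : F, y ^ (5 * N) * (y - y ^ (2 * (4 * t + 1) + 1)) ^ (4 * t + 1) =
      (-1) ^ t * (4 * t + 1).choose t := by
    rw [hsum, filter_dvd_eq_singleton (i := 3 * t + 1) (by omega) (by omega) (by omega),
      sum_singleton, Nat.choose_symm_of_eq_add (show 4 * t + 1 = (3 * t + 1) + t by omega),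
      show 3 * t + 1 = 2 * t + t + 1 by omega, pow_succ, pow_add, pow_mul]
    ring
  have hseven : ∑ y : F, y ^ (7 * N) * (y - y ^ (2 * (4 * t + 1) + 1)) ^ (4 * t + 1) =
      (-1) ^ (t + 1) * (4 * t + 1).choose t := by
    rw [hsum, filter_dvd_eq_singleton (i := t) (by omega) (by omega) (by omega), sum_singleton]
    ring
  calc _ = ∑ y, (octicSign α y : F) * (2 * (w - w ^ 3)) *
          (y - y ^ (2 * (4 * t + 1) + 1)) ^ (4 * t + 1) := by
        rw [mul_assoc, sum_mul]
        exact sum_congr rfl fun y _ ↦ by ring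
    _ = _ := by
        have hF8 : Fintype.card F - 1 = 8 * N := by rw [hF]; ring
        simp only [hw, intCast_octicSign_mul hα hF8, add_mul, sub_mul, sum_add_distrib,
          sum_sub_distrib, hone, hthree, hfive, hseven]
        ring

end

section

variable {K F : Type*} [Field K] [Fintype K] [DecidableEq K] [Field F] [Fintype F] [Algebra K F]

lemma IsSemiInvariant.sum_mul_sub_pow_card_pow {f : F → ℤ}
    (hf : IsSemiInvariant (quadraticChar K) f) (hKF : Module.finrank K F = 2)
    (hK : ringChar K ≠ 2) {τ : F} (hτ : τ ^ Fintype.card K = -τ)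
    (hτK : LinearIndependent K ![1, τ]) :
    ∑ y, (f y : F) * (y - y ^ Fintype.card K) ^ (Fintype.card K / 2) =
      -((2 * τ) ^ (Fintype.card K / 2) * (lineSum K f τ 1 : ℤ)) := by
  have := Module.finite_of_finrank_pos (hKF ▸ two_pos)
  have hodd := FiniteField.odd_card_of_char_ne_two hK
  have hhalf : Fintype.card K / 2 ≠ 0 := by
    have := Fintype.one_lt_card (α := K)
    omega
  have hfrob (a s : K) :
      (a • τ + s • 1) - (a • τ + s • 1) ^ Fintype.card K = a • (2 * τ) := by
    rw [← congrFun (FiniteField.coe_frobeniusAlgEquivOfAlgebraic K F) (a • τ + s • 1), map_add,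
      map_smul, map_smul, FiniteField.coe_frobeniusAlgEquivOfAlgebraic]
    simp only [hτ, one_pow, two_mul]
    module
  have hline (a : K) (ha : a ≠ 0) :
      ∑ s : K, (f (a • τ + s • 1) : F) * (a • (2 * τ)) ^ (Fintype.card K / 2) =
        (2 * τ) ^ (Fintype.card K / 2) * (lineSum K f τ 1 : ℤ) := by
    have hχ : algebraMap K F a ^ (Fintype.card K / 2) = (quadraticChar K a : ℤ) := by
      rw [← map_pow, ← quadraticChar_eq_pow_of_char_ne_two' hK, map_intCast]
    have hχ2 : ((quadraticChar K a : ℤ) : F) ^ 2 = 1 := by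
      exact_mod_cast congrArg (Int.cast (R := F)) (quadraticChar_sq_one ha)
    have hsum : ∑ s : K, (f (a • τ + s • 1) : F) = (quadraticChar K a : ℤ) * lineSum K f τ 1 := by
      rw [← Int.cast_mul, ← hf.lineSum_smul τ 1 ha, lineSum, Int.cast_sum]
    rw [← sum_mul, hsum, Algebra.smul_def, mul_pow, hχ]
    linear_combination (2 * τ) ^ (Fintype.card K / 2) * ((lineSum K f τ 1 : ℤ) : F) * hχ2
  rw [sum_eq_sum_sum_of_finrank_eq_two hKF hτK]
  simp only [hfrob]
  rw [sum_eq_zero_add_of_forall_ne_zero hline]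
  have : ((Fintype.card K : ℕ) : F) = 0 := by
    rw [← map_natCast (algebraMap K F), FiniteField.cast_card_eq_zero, map_zero]
  simp [this, hhalf]

end

section

variable {K F : Type*} [Field K] [Fintype K] [Field F] [Fintype F] [Algebra K F] [DecidableEq F]
  {α : F}

lemma lineSum_octicSign_ne_zero (hKF : Module.finrank K F = 2)
    (hα : IsPrimitiveRoot α (Fintype.card F - 1)) {t : ℕ} (hK : Fintype.card K = 8 * t + 3)
    (hchoose : ((4 * t + 1).choose t : F) ≠ 0) :
    ((lineSum K (octicSign α) (traceZeroPow K α) 1 : ℤ) : F) ≠ 0 := by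
  classical
  have hchar : ringChar K ≠ 2 := mt FiniteField.even_card_iff_char_two.mp (by omega)
  have hF := card_sub_one_of_finrank_eq_two (F := F) hKF
  have hτ := traceZeroPow_pow_card hKF hα (Nat.odd_iff.mpr (by omega))
  have hτK := linearIndependent_mul_traceZeroPow hKF hα hchar one_ne_zero
  rw [one_mul] at hτK
  have hplane := (isSemiInvariant_octicSign hKF hα (by omega)).sum_mul_sub_pow_card_pow
    hKF hchar hτ hτK
  have hF4 : Fintype.card F - 1 = (4 * t + 1) * (8 * (2 * t + 1)) := by
    rw [hF, hK, show 8 * t + 3 - 1 = 2 * (4 * t + 1) by omega]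
    ring
  have htwo : (2 : F) ≠ 0 := by
    rw [← map_ofNat (algebraMap K F) 2, Ne, map_eq_zero]
    exact Ring.two_ne_zero hchar
  rw [show Fintype.card K / 2 = 4 * t + 1 by omega,
    show Fintype.card K = 2 * (4 * t + 1) + 1 by omega] at hplane
  have hsum := sum_octicSign_mul_sub_pow hα hF4 rfl
  intro hzero
  rw [hplane, hzero, mul_zero, neg_zero, zero_mul, zero_mul] at hsum
  exact mul_ne_zero (mul_ne_zero (pow_ne_zero _ (neg_ne_zero.mpr one_ne_zero)) hchoose) htwo
    hsum.symm

lemma lineSum_octicSign_sq_eq_one (hKF : Module.finrank K F = 2)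
    (hα : IsPrimitiveRoot α (Fintype.card F - 1)) {p k : ℕ} (hp : p.Prime) (hp8 : p % 8 = 3)
    (hK : Fintype.card K = p ^ (2 * k + 1)) {w : ℤ} (hw : 1 + 2 * w ^ 2 = (p : ℤ) ^ (2 * k + 1)) :
    lineSum K (octicSign α) (α * traceZeroPow K α) α ^ 2 = 1 := by
  have := Fact.mk hp
  have := charP_of_card_eq_prime_pow hK
  have := charP_of_injective_algebraMap (algebraMap K F).injective p
  have hpow8 := pow_two_mul_add_one_mod_eight hp8 k
  obtain ⟨t, ht⟩ : ∃ t, p ^ (2 * k + 1) = 8 * t + 3 := ⟨p ^ (2 * k + 1) / 8, by omega⟩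
  have hsum := lineSum_sq_add_two_mul_lineSum_sq hKF hα (by omega)
  have hndvd : ¬ (p : ℤ) ∣ lineSum K (octicSign α) (traceZeroPow K α) 1 := by
    rw [← CharP.intCast_eq_zero_iff F p]
    refine lineSum_octicSign_ne_zero hKF hα (hK.trans ht) ?_
    rw [Ne, CharP.cast_eq_zero_iff F p]
    exact not_dvd_choose_of_pow_eq hp hp8 k ht
  obtain ⟨y, hy⟩ : 2 ∣ lineSum K (octicSign α) (traceZeroPow K α) 1 :=
    Int.prime_two.dvd_of_dvd_pow (n := 2) (by omega)
  rw [hy] at hsum hndvd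
  rw [hK] at hsum
  push_cast at hsum
  rw [sq_eq_sq_of_sq_add_mul_sq_eq_prime_pow (n := 2) (Y := y) (Z := 1) (W := w) le_rfl
    hp (by omega) (by linarith) (by rwa [one_pow]) (mt (dvd_mul_of_dvd_right · 2) hndvd)
    (by exact_mod_cast hp.one_lt.ne' ∘ Nat.dvd_one.mp), one_pow]

end

end LineSumEvaluation

section SkewPDS

variable {K F : Type*} [Field K] [Fintype K] [Field F] [Fintype F] [Algebra K F] [DecidableEq F]
  {α : F} {t : ℕ}

lemma octicSign_eq_zero_of_mem (hα : IsPrimitiveRoot α (Fintype.card F - 1))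
    (h8 : 8 ∣ Fintype.card F - 1) {y : F} (hy : y ∈ cycClass α 4 0) : octicSign α y = 0 := by
  obtain ⟨j, -, rfl⟩ := mem_image.mp hy
  rw [octicSign_pow hα h8, ZMod.χ₈_nat_eq_if_mod_eight, if_pos (by omega)]

lemma autocorr_octicSign_sq (hKF : Module.finrank K F = 2)
    (hα : IsPrimitiveRoot α (Fintype.card F - 1)) (hK : Fintype.card K = 8 * t + 3) {d : F}
    (hd : d ≠ 0) :
    autocorr (fun y ↦ octicSign α y ^ 2) d = (4 * t + 2) * (4 * t + 1) - octicSign α d ^ 2 := by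
  classical
  have hF := card_mod_sixteen_of_finrank_eq_two (F := F) hKF (by omega)
  have hidem (y : F) : (octicSign α y ^ 2) ^ 2 = octicSign α y ^ 2 := by
    rw [octicSign]
    split_ifs <;> rfl
  have hsum : ∑ y, octicSign α y ^ 2 = (4 * t + 2) * (Fintype.card K - 1 : ℤ) := by
    have hhalf : (Fintype.card F - 1) / 2 = (4 * t + 2) * (8 * t + 2) := by
      rw [card_sub_one_of_finrank_eq_two (F := F) hKF, hK,
        show 8 * t + 3 + 1 = 2 * (4 * t + 2) by ring, mul_assoc,
        Nat.mul_div_cancel_left _ two_pos]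
      rfl
    rw [sum_octicSign_sq hα (by omega), hhalf, hK]
    push_cast
    ring
  rw [((isSemiInvariant_octicSign hKF hα (by omega)).sq
    (quadraticChar_isQuadratic K).sq_eq_one).autocorr_of_one hKF
    (by simpa only [hidem] using hsum) hsum hd, hidem, hK]
  push_cast
  linear_combination hidem d

lemma autocorr_octicSign_of_lineSum_sq_eq_one (hKF : Module.finrank K F = 2)
    (hα : IsPrimitiveRoot α (Fintype.card F - 1)) (hK : Fintype.card K = 8 * t + 3)
    (hline : lineSum K (octicSign α) (α * traceZeroPow K α) α ^ 2 = 1) {d : F} (hd : d ≠ 0) :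
    autocorr (octicSign α) d =
      if d ∈ cycClass α 4 0 then (12 * t + 2 : ℤ) else octicSign α d ^ 2 - (4 * t + 2) := by
  have hF := card_mod_sixteen_of_finrank_eq_two (F := F) hKF (by omega)
  have hchar : ringChar K ≠ 2 := mt FiniteField.even_card_iff_char_two.mp (by omega)
  have hone := two_mul_autocorr_octicSign hKF hα (by omega)
    (linearIndependent_mul_traceZeroPow hKF hα hchar (primitiveRoot_ne_zero hα))
  have htwo := two_mul_autocorr_octicSign_pow_two hKF hα (by omega)
  have hthree := autocorr_octicSign_pow_three hKF hα (by omega)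
  have hsum := sum_autocorr_octicSign_pow hα (by omega)
  simp only [sum_range_succ, range_zero, sum_empty, pow_zero, pow_one] at hsum
  rw [hline, hK] at hone
  rw [hK] at htwo
  obtain ⟨n, -, rfl⟩ := exists_pow_eq_of_ne_zero hα hd
  have hsq : octicSign α (α ^ n) ^ 2 = (n % 2 : ℕ) := by
    rw [octicSign_pow hα (by omega), ZMod.χ₈_nat_eq_if_mod_eight]
    split_ifs <;> simp <;> omega
  simp only [pow_mem_cycClass_iff hα (by omega : 4 ∣ Fintype.card F - 1), Nat.ModEq, hsq]
  rw [autocorr_octicSign_pow_congr hα (by omega) (Nat.mod_modEq n 4).symm,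
    ← Nat.mod_mod_of_dvd n (by decide : 2 ∣ 4)]
  have hn : n % 4 < 4 := Nat.mod_lt n (by norm_num)
  generalize n % 4 = r at hn
  interval_cases r <;> simp <;> omega

lemma autocorr_indicator_cycClass_union (hKF : Module.finrank K F = 2)
    (hα : IsPrimitiveRoot α (Fintype.card F - 1)) (hK : Fintype.card K = 8 * t + 3)
    (hline : lineSum K (octicSign α) (α * traceZeroPow K α) α ^ 2 = 1) {d : F} (hd : d ≠ 0) :
    autocorr (((cycClass α 8 3 ∪ cycClass α 8 5 : Finset F) : Set F).indicator (1 : F → ℤ)) d =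
      if d ∈ cycClass α 4 0 then (4 * t ^ 2 + 6 * t + 1 : ℤ) else 4 * t ^ 2 + 2 * t := by
  have hF := card_mod_sixteen_of_finrank_eq_two (F := F) hKF (by omega)
  have hodd : (octicSign α).Odd := octicSign_odd hα hF
  have heven : (fun y ↦ octicSign α y ^ 2).Even := fun y ↦ by simp only [hodd y, neg_sq]
  have hfour := autocorr_const_mul 2
    (((cycClass α 8 3 ∪ cycClass α 8 5 : Finset F) : Set F).indicator (1 : F → ℤ)) d
  simp only [two_mul_indicator_cycClass_union hα (by omega : 8 ∣ Fintype.card F - 1)] at hfour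
  rw [autocorr_sub_of_even_of_odd heven hodd, autocorr_octicSign_sq hKF hα hK hd,
    autocorr_octicSign_of_lineSum_sq_eq_one hKF hα hK hline hd] at hfour
  split_ifs at hfour ⊢ with hd4
  · rw [octicSign_eq_zero_of_mem hα (by omega) hd4] at hfour
    linarith
  · linarith

lemma isSkewPDS_cycClass_three_union_five (hKF : Module.finrank K F = 2)
    (hα : IsPrimitiveRoot α (Fintype.card F - 1)) (hK : Fintype.card K = 8 * t + 3)
    (hline : lineSum K (octicSign α) (α * traceZeroPow K α) α ^ 2 = 1) :
    IsSkewPDS (cycClass α 8 3 ∪ cycClass α 8 5) (cycClass α 4 0) (Fintype.card F)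
      ((Fintype.card F - 1) / 4) (4 * t ^ 2 + 6 * t + 1) (4 * t ^ 2 + 2 * t) := by
  have hF := card_mod_sixteen_of_finrank_eq_two (F := F) hKF (by omega)
  refine ⟨⟨rfl, card_cycClass hα (by omega) 0, intDiff_eq_of_autocorr fun d hd ↦ ?_⟩, ?_,
    intDiff_eq_of_autocorr fun d hd ↦ ?_⟩
  · rw [autocorr_indicator_cycClass hKF hα (s := 2 * t + 1) (by omega) 0 hd, hK]
    push_cast
    split_ifs <;> ring
  · rw [card_union_of_disjoint (disjoint_cycClass hα (by omega) (by decide)),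
      card_cycClass hα (by omega), card_cycClass hα (by omega)]
    omega
  · rw [autocorr_indicator_cycClass_union hKF hα hK hline hd]
    push_cast
    rfl

end SkewPDS

section Translates

variable {F : Type*} [Field F] [Fintype F] [DecidableEq F] {α : F}

lemma IsSkewPDS.cycClass_add (hα : IsPrimitiveRoot α (Fintype.card F - 1))
    (h8 : 8 ∣ Fintype.card F - 1) {v k lam mu : ℕ}
    (h : IsSkewPDS (cycClass α 8 3 ∪ cycClass α 8 5) (cycClass α 4 0) v k lam mu) (i : ℕ) :
    IsSkewPDS (cycClass α 8 i ∪ cycClass α 8 (i + 2)) (cycClass α 4 (i + 1)) v k lam mu := by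
  have himage (e j : ℕ) : (cycClass α e j).image
      (LinearEquiv.smulOfNeZero F F (α ^ (i + 5))
        (pow_ne_zero _ (primitiveRoot_ne_zero hα))).toAddEquiv = cycClass α e (i + 5 + j) :=
    cycClass_image_mul α e j (i + 5)
  have h4 : 4 ∣ Fintype.card F - 1 := dvd_trans (by decide) h8
  have hi := h.image (LinearEquiv.smulOfNeZero F F (α ^ (i + 5))
    (pow_ne_zero _ (primitiveRoot_ne_zero hα))).toAddEquiv
  rwa [image_union, himage, himage, himage,
    cycClass_congr hα h8 (show i + 5 + 3 ≡ i [MOD 8] by simp [Nat.ModEq, add_assoc]),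
    cycClass_congr hα h8 (show i + 5 + 5 ≡ i + 2 [MOD 8] by rw [Nat.ModEq]; omega),
    cycClass_congr hα h4 (show i + 5 + 0 ≡ i + 1 [MOD 4] by rw [Nat.ModEq]; omega)] at hi

end Translates

section Subfield

lemma exists_field_finrank_eq {F : Type*} [Field F] [Fintype F] {p n d : ℕ} (hp : p.Prime)
    (hn : n ≠ 0) (hF : Fintype.card F = p ^ (n * d)) :
    ∃ (K : Type) (_ : Field K) (_ : Fintype K) (_ : Algebra K F),
      Fintype.card K = p ^ n ∧ Module.finrank K F = d := by
  have := Fact.mk hp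
  have := charP_of_card_eq_prime_pow hF
  let := ZMod.algebra F p
  let := Fintype.ofFinite (GaloisField p n)
  have hK : Fintype.card (GaloisField p n) = p ^ n := by
    rw [← Nat.card_eq_fintype_card, GaloisField.card p n hn]
  have hfinrank : Module.finrank (ZMod p) F = n * d :=
    Nat.pow_right_injective hp.two_le <| by
      simpa only [ZMod.card, hF] using (Module.card_eq_pow_finrank (K := ZMod p) (V := F)).symm
  obtain ⟨f⟩ := FiniteField.nonempty_algHom_of_finrank_dvd (F := ZMod p) (K := GaloisField p n)
    (L := F) (by rw [hfinrank, GaloisField.finrank p hn]; exact dvd_mul_right n d)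
  let := f.toRingHom.toAlgebra
  refine ⟨GaloisField p n, inferInstance, inferInstance, inferInstance, hK, ?_⟩
  have hcard := Module.card_eq_pow_finrank (K := GaloisField p n) (V := F)
  rw [hF, hK, ← pow_mul] at hcard
  exact (mul_left_cancel₀ hn (Nat.pow_right_injective hp.two_le hcard)).symm

end Subfield

/-- Let `q = p^m` with `p ≡ 3 (mod 8)` prime and `m ≡ 2 (mod 4)`; let
`x, a, b` be integers with `x² = q`, `q = a² + 2b²`, `a ≡ 1 (mod 4)` and `x + a = -2`.
Then `D = C_3^8 ∪ C_5^8` is a skew PDS corresponding to the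
`(q,(q-1)/4,(q-11-6x)/16,(q-3+2x)/16)`-PDS `C_0^4`, and more generally for `0 ≤ i ≤ 7`
the set `C_i^8 ∪ C_{i+2}^8` is a skew PDS corresponding to the PDS `C_{i+1}^4` (with
the same parameters; indices of cyclotomic classes are automatically periodic). -/
theorem stmt_4 {F : Type*} [Field F] [Fintype F] [DecidableEq F]
    (q p m : ℕ) (hp : p.Prime) (hp8 : p % 8 = 3) (hm : m % 4 = 2)
    (hq : Fintype.card F = q) (hqpm : q = p ^ m)
    (α : F) (hα : IsPrimitiveElt α)
    (x a b : ℤ) (hx : x ^ 2 = (q : ℤ)) (hab : (q : ℤ) = a ^ 2 + 2 * b ^ 2)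
    (ha4 : a % 4 = 1) (hxa : x + a = -2) :
    ∃ lam mu : ℕ,
      16 * (lam : ℤ) = (q : ℤ) - 11 - 6 * x ∧
      16 * (mu : ℤ) = (q : ℤ) - 3 + 2 * x ∧
      IsSkewPDS (cycClass α 8 3 ∪ cycClass α 8 5) (cycClass α 4 0)
        q ((q - 1) / 4) lam mu ∧
      (∀ i : ℕ, i ≤ 7 →
        IsSkewPDS (cycClass α 8 i ∪ cycClass α 8 (i + 2)) (cycClass α 4 (i + 1))
          q ((q - 1) / 4) lam mu) := by
  obtain ⟨k, rfl⟩ : ∃ k, m = (2 * k + 1) * 2 := ⟨m / 4, by omega⟩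
  subst hq
  obtain ⟨K, _, _, _, hK, hKF⟩ := exists_field_finrank_eq hp (n := 2 * k + 1) (by omega) hqpm
  have hqP : (Fintype.card F : ℤ) = ((p : ℤ) ^ (2 * k + 1)) ^ 2 := by
    exact_mod_cast hqpm.trans (pow_mul p _ 2)
  obtain ⟨rfl, w, hw⟩ := eq_neg_and_exists_one_add_two_mul_sq_eq
    (pow_pos (by exact_mod_cast hp.pos) _) (hx.trans hqP) (hqP.symm.trans hab) hxa
  have hP8 := pow_two_mul_add_one_mod_eight hp8 k
  obtain ⟨t, ht⟩ : ∃ t, p ^ (2 * k + 1) = 8 * t + 3 := ⟨p ^ (2 * k + 1) / 8, by omega⟩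
  have htZ : (p : ℤ) ^ (2 * k + 1) = 8 * t + 3 := by exact_mod_cast ht
  have hF := card_mod_sixteen_of_finrank_eq_two (F := F) hKF (by omega)
  have hroot := hα.isPrimitiveRoot (by omega)
  have hskew := isSkewPDS_cycClass_three_union_five hKF hroot (hK.trans ht)
    (lineSum_octicSign_sq_eq_one hKF hroot hp hp8 hK hw)
  refine ⟨4 * t ^ 2 + 6 * t + 1, 4 * t ^ 2 + 2 * t, ?_, ?_, hskew,
    fun i _ ↦ hskew.cycClass_add hroot (by omega) i⟩
  all_goals
    rw [hqP, htZ]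
    push_cast
    ring
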